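/- ∑_{k=1}^∞ (27/20)^k / (k² · C(3k,k)) = 6·arctan²(√15 − √12) − (1/2)·log²(5/2). -/

import Mathlib

/-!
By the Beta integral, `1 / (k * C(3k, k)) = ∫₀¹ t ^ (k - 1) * (1 - t) ^ (2k) dt`, so the series
`F w = ∑ w ^ k / (k² * C(3k, k))` has derivative `∫₀¹ (1 - t)² / (1 - w * t * (1 - t)²) dt` on
`|w| < 27 / 4`. Prescribing the root `1 / u` of the cubic in the denominator, that is, putting
`w = u³ / (1 - u)²`, makes the other quadratic factor have discriminant `-u² * (3 - 4u)`. The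
integral is then elementary, and its arctangents all collapse to `arctan √(3 - 4u)`, which yields
`F w = 6 * (π / 3 - arctan √(3 - 4u))² - log² (1 - u) / 2`. The theorem is the case `u = 3 / 5`.
-/

open Real

open MeasureTheory Set

section PowerSeries

variable {𝕜 : Type*} [RCLike 𝕜]

lemma hasSum_integral_mul_pow_mul_pow {α : Type*} {_ : MeasurableSpace α} {μ : Measure α}
    {g h : α → 𝕜} {ρ : ℝ} {w : 𝕜} (hg : Integrable g μ) (hh : AEStronglyMeasurable h μ)
    (hρ : ∀ᵐ t ∂μ, ‖h t‖ ≤ ρ) (hw : ‖w‖ * ρ < 1) :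
    HasSum (fun k : ℕ ↦ (∫ t, g t * h t ^ k ∂μ) * w ^ k) (∫ t, g t / (1 - w * h t) ∂μ) := by
  simp_rw [← integral_mul_const]
  have norm_le {t : α} (ht : ‖h t‖ ≤ ρ) : ‖w * h t‖ ≤ ‖w‖ * ρ := by
    rw [norm_mul]
    gcongr
  have term_eq (k : ℕ) (t : α) : g t * h t ^ k * w ^ k = g t * (w * h t) ^ k := by ring
  simp only [term_eq]
  refine hasSum_integral_of_dominated_convergence (fun k t ↦ ‖g t‖ * (‖w‖ * ρ) ^ k)
    (fun k ↦ hg.1.mul ((hh.const_mul w).pow k)) (fun k ↦ ?_) ?_ ?_ ?_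
  · filter_upwards [hρ] with t ht
    rw [norm_mul, norm_pow]
    gcongr
    exact norm_le ht
  · filter_upwards [hρ] with t ht
    exact (summable_geometric_of_lt_one ((norm_nonneg _).trans (norm_le ht)) hw).mul_left _
  · simp_rw [tsum_mul_left]
    exact hg.norm.mul_const _
  · filter_upwards [hρ] with t ht
    rw [div_eq_mul_inv]
    exact (hasSum_geometric_of_norm_lt_one ((norm_le ht).trans_lt hw)).mul_left _

lemma hasDerivAt_tsum_mul_pow_succ_div {c : ℕ → 𝕜} {R : ℝ} {w : 𝕜}
    (hc : Summable fun k ↦ ‖c k‖ * R ^ k) (hw : ‖w‖ < R) :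
    HasDerivAt (fun z ↦ ∑' k, c k * z ^ (k + 1) / (k + 1)) (∑' k, c k * w ^ k) w := by
  refine hasDerivAt_tsum_of_isPreconnected (g := fun k z ↦ c k * z ^ (k + 1) / (k + 1))
    (g' := fun k z ↦ c k * z ^ k) (t := Metric.ball 0 R) (y₀ := 0) hc Metric.isOpen_ball
    Metric.isPreconnected_ball (fun k z _ ↦ ?_) (fun k z hz ↦ ?_)
    (Metric.mem_ball_self ((norm_nonneg w).trans_lt hw)) ?_ (mem_ball_zero_iff.mpr hw)
  · have hk : (k + 1 : 𝕜) ≠ 0 := by exact_mod_cast k.succ_ne_zero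
    refine (((hasDerivAt_pow (k + 1) z).const_mul (c k)).div_const (k + 1 : 𝕜)).congr_deriv ?_
    push_cast
    field_simp
  · rw [norm_mul, norm_pow]
    gcongr
    exact (mem_ball_zero_iff.mp hz).le
  · simp

end PowerSeries

lemma integral_pow_mul_one_sub_pow (m n : ℕ) :
    ∫ t in (0 : ℝ)..1, t ^ m * (1 - t) ^ n =
      1 / ((m + 1 : ℝ) * ((m + n + 1).choose (m + 1) : ℕ)) := by
  have beta : (m.factorial * n.factorial : ℝ) =
      (m + n + 1).factorial * ∫ t in (0 : ℝ)..1, t ^ m * (1 - t) ^ n := by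
    have h := Complex.Gamma_mul_Gamma_eq_betaIntegral (s := m + 1) (t := n + 1)
      (by simpa using Nat.cast_add_one_pos m) (by simpa using Nat.cast_add_one_pos n)
    rw [show (m + 1 + (n + 1) : ℂ) = (m + n + 1 : ℕ) + 1 by push_cast; ring] at h
    simp only [Complex.Gamma_nat_eq_factorial, Complex.betaIntegral, add_sub_cancel_right,
      Complex.cpow_natCast] at h
    apply Complex.ofReal_injective
    push_cast [← intervalIntegral.integral_ofReal]
    exact_mod_cast h
  have choose := Nat.choose_mul_factorial_mul_factorial (n := m + n + 1) (k := m + 1) (by omega)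
  rw [show m + n + 1 - (m + 1) = n by omega, Nat.factorial_succ m] at choose
  rw [← choose] at beta
  push_cast at beta
  have hm : (m.factorial : ℝ) ≠ 0 := by positivity
  have hn : (n.factorial : ℝ) ≠ 0 := by positivity
  apply eq_one_div_of_mul_eq_one_right
  apply mul_left_cancel₀ (mul_ne_zero hm hn)
  linarith

/-- The series `∑_{k ≥ 1} w ^ k / (k² * C(3k, k))`, indexed from `k = 0`. -/
noncomputable def invSqChooseSeries (w : ℝ) : ℝ :=
  ∑' k : ℕ, w ^ (k + 1) / (((k : ℝ) + 1) ^ 2 * ((3 * (k + 1)).choose (k + 1) : ℕ))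

@[simp]
lemma invSqChooseSeries_zero : invSqChooseSeries 0 = 0 := by simp [invSqChooseSeries]

lemma mul_one_sub_sq_le {t : ℝ} (ht : t ≤ 4 / 3) : t * (1 - t) ^ 2 ≤ 4 / 27 := by
  have factored : 4 / 27 - t * (1 - t) ^ 2 = (t - 1 / 3) ^ 2 * (4 / 3 - t) := by ring
  rw [← sub_nonneg, factored]
  exact mul_nonneg (sq_nonneg _) (sub_nonneg.mpr ht)

lemma hasSum_one_div_mul_choose_mul_pow {w : ℝ} (hw : |w| < 27 / 4) :
    HasSum (fun k : ℕ ↦ 1 / ((k + 1 : ℝ) * ((3 * (k + 1)).choose (k + 1) : ℕ)) * w ^ k)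
      (∫ t in (0 : ℝ)..1, (1 - t) ^ 2 / (1 - w * (t * (1 - t) ^ 2))) := by
  have bound : ∀ᵐ t ∂volume.restrict (Ioc (0 : ℝ) 1), ‖t * (1 - t) ^ 2‖ ≤ 4 / 27 := by
    refine ae_restrict_of_forall_mem measurableSet_Ioc fun t ht ↦ ?_
    rw [norm_of_nonneg (mul_nonneg ht.1.le (sq_nonneg _))]
    exact mul_one_sub_sq_le (ht.2.trans (by norm_num))
  have integrable : IntegrableOn (fun t : ℝ ↦ (1 - t) ^ 2) (Ioc 0 1) :=
    (by fun_prop : Continuous fun t : ℝ ↦ (1 - t) ^ 2).integrableOn_Ioc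
  have coeff (k : ℕ) : ∫ t in Ioc (0 : ℝ) 1, (1 - t) ^ 2 * (t * (1 - t) ^ 2) ^ k =
      1 / ((k + 1 : ℝ) * ((3 * (k + 1)).choose (k + 1) : ℕ)) := by
    rw [← intervalIntegral.integral_of_le zero_le_one,
      show 3 * (k + 1) = k + (2 * k + 2) + 1 by ring, ← integral_pow_mul_one_sub_pow]
    refine intervalIntegral.integral_congr fun t _ ↦ ?_
    rw [mul_pow, ← pow_mul]
    ring
  have h := hasSum_integral_mul_pow_mul_pow (w := w) integrable
    (by fun_prop : Continuous fun t : ℝ ↦ t * (1 - t) ^ 2).aestronglyMeasurable bound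
    (by rw [norm_eq_abs]; linarith)
  simpa only [coeff, ← intervalIntegral.integral_of_le zero_le_one] using h

lemma hasDerivAt_invSqChooseSeries {w : ℝ} (hw : |w| < 27 / 4) :
    HasDerivAt invSqChooseSeries
      (∫ t in (0 : ℝ)..1, (1 - t) ^ 2 / (1 - w * (t * (1 - t) ^ 2))) w := by
  obtain ⟨R, hwR, hR⟩ := exists_between hw
  have hR' : |R| < 27 / 4 := by rwa [abs_of_pos ((abs_nonneg w).trans_lt hwR)]
  set c : ℕ → ℝ := fun k ↦ 1 / ((k + 1 : ℝ) * ((3 * (k + 1)).choose (k + 1) : ℕ))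
  have summable : Summable fun k ↦ ‖c k‖ * R ^ k := by
    refine (hasSum_one_div_mul_choose_mul_pow hR').summable.congr fun k ↦ ?_
    rw [norm_of_nonneg (by positivity)]
  have series_eq : invSqChooseSeries = fun z ↦ ∑' k, c k * z ^ (k + 1) / (k + 1) := by
    funext z
    refine tsum_congr fun k ↦ ?_
    simp only [c]
    field_simp
  rw [series_eq, ← (hasSum_one_div_mul_choose_mul_pow hw).tsum_eq]
  exact hasDerivAt_tsum_mul_pow_succ_div summable hwR

/-- The value of `w` for which `1 / u` is a root of the cubic `1 - w * t * (1 - t)²` in `t`. -/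
noncomputable def cubicParam (u : ℝ) : ℝ := u ^ 3 / (1 - u) ^ 2

/-- The maximal interval of parameters around `0` that `cubicParam` maps into the disc of
convergence `|w| < 27 / 4`; its right endpoint `3 / 4` is mapped to `27 / 4`. -/
def cubicParamDomain : Set ℝ := Iio (3 / 4) ∩ cubicParam ⁻¹' Ioi (-(27 / 4))

lemma abs_cubicParam_lt {u : ℝ} (hu : u ∈ cubicParamDomain) : |cubicParam u| < 27 / 4 := by
  obtain ⟨hu, lower⟩ := hu
  rw [mem_Iio] at hu
  refine abs_lt.mpr ⟨lower, ?_⟩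
  have factored : 27 * (1 - u) ^ 2 - u ^ 3 * 4 = (3 - 4 * u) * (3 - u) ^ 2 := by ring
  rw [cubicParam, div_lt_div_iff₀ (pow_pos (by linarith) 2) (by norm_num), ← sub_pos, factored]
  exact mul_pos (by linarith) (pow_pos (by linarith) 2)

lemma hasDerivAt_cubicParam {u : ℝ} (hu : u ≠ 1) :
    HasDerivAt cubicParam (u ^ 2 * (3 - u) / (1 - u) ^ 3) u := by
  have h1 : 1 - u ≠ 0 := sub_ne_zero.mpr hu.symm
  refine ((hasDerivAt_pow 3 u).div (((hasDerivAt_id u).const_sub 1).pow 2)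
    (pow_ne_zero 2 h1)).congr_deriv ?_
  simp only [id, Pi.pow_apply]
  field_simp
  ring

lemma monotoneOn_cubicParam : MonotoneOn cubicParam (Iio 1) := by
  have hasDeriv {u : ℝ} (hu : u ∈ Iio (1 : ℝ)) := hasDerivAt_cubicParam hu.ne
  refine monotoneOn_of_deriv_nonneg (convex_Iio 1)
    (fun u hu ↦ (hasDeriv hu).continuousAt.continuousWithinAt) ?_ ?_ <;> rw [interior_Iio]
  · exact fun u hu ↦ (hasDeriv hu).differentiableAt.differentiableWithinAt
  · intro u hu
    rw [(hasDeriv hu).deriv]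
    rw [mem_Iio] at hu
    exact div_nonneg (mul_nonneg (sq_nonneg u) (by linarith)) (pow_nonneg (by linarith) 3)

lemma isOpen_cubicParamDomain : IsOpen cubicParamDomain :=
  ContinuousOn.isOpen_inter_preimage
    (fun u (hu : u < 3 / 4) ↦
      (hasDerivAt_cubicParam (by linarith)).continuousAt.continuousWithinAt)
    isOpen_Iio isOpen_Ioi

lemma isPreconnected_cubicParamDomain : IsPreconnected cubicParamDomain := by
  refine OrdConnected.isPreconnected ⟨fun x hx y hy z hz ↦ ?_⟩
  have hz1 : z < 3 / 4 := hz.2.trans_lt hy.1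
  have hx1 : x < 3 / 4 := hz.1.trans_lt hz1
  have mono : cubicParam x ≤ cubicParam z :=
    monotoneOn_cubicParam (hx1.trans (by norm_num)) (hz1.trans (by norm_num)) hz.1
  exact ⟨hz1, hx.2.trans_le mono⟩

section Integral

variable {u q t : ℝ}

lemma arctan_inv_sub_arctan_half_sub_inv (hq : 0 < q) :
    arctan q⁻¹ - arctan ((q - q⁻¹) / 2) = 3 * (π / 3 - arctan q) := by
  have half : arctan ((q - q⁻¹) / 2) = arctan q - arctan q⁻¹ := by
    have hmul : q * -q⁻¹ = -1 := by field_simp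
    rw [sub_eq_add_neg (arctan q), ← arctan_neg, arctan_add (by rw [hmul]; norm_num), hmul]
    norm_num [sub_eq_add_neg]
  rw [half, arctan_inv_of_pos hq]
  ring

/-- The second factor of the cubic with root `1 / u`: see `one_sub_cubicParam_mul`. -/
def quadraticFactor (u t : ℝ) : ℝ := u ^ 2 * t ^ 2 + u * (1 - 2 * u) * t + (1 - u) ^ 2

lemma one_sub_cubicParam_mul (hu : u ≠ 1) :
    1 - cubicParam u * (t * (1 - t) ^ 2) =
      (1 - u * t) * quadraticFactor u t / (1 - u) ^ 2 := by
  have h1 : 1 - u ≠ 0 := sub_ne_zero.mpr hu.symm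
  rw [cubicParam, quadraticFactor]
  field_simp
  ring

lemma four_mul_quadraticFactor (hq : q ^ 2 = 3 - 4 * u) :
    4 * quadraticFactor u t = q ^ 2 + (2 * u * t + 1 - 2 * u) ^ 2 := by
  rw [hq, quadraticFactor]
  ring

lemma quadraticFactor_pos (hu : u < 3 / 4) : 0 < quadraticFactor u t := by
  have h := four_mul_quadraticFactor (t := t) (sq_sqrt (by linarith : 0 ≤ 3 - 4 * u))
  have hq : 0 < √(3 - 4 * u) := sqrt_pos.mpr (by linarith)
  nlinarith [sq_nonneg (2 * u * t + 1 - 2 * u), pow_pos hq 2]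

/-- An antiderivative in `t` of the constant `u³ * (3 - u) / (1 - u)²` times the integrand
`(1 - t)² / (1 - w * t * (1 - t)²)`, where `w = cubicParam u` and `q = √(3 - 4u)`. -/
noncomputable def cubicAntideriv (u q t : ℝ) : ℝ :=
  2 * u / q * arctan ((2 * u * t + 1 - 2 * u) / q) - (1 - u) * log (1 - u * t) -
    log (quadraticFactor u t)

lemma hasDerivAt_cubicAntideriv (hq : 0 < q) (hqu : q ^ 2 = 3 - 4 * u) (hut : u * t < 1) :
    HasDerivAt (cubicAntideriv u q)
      (u ^ 3 * (3 - u) / (1 - u) ^ 2 *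
        ((1 - t) ^ 2 / (1 - cubicParam u * (t * (1 - t) ^ 2)))) t := by
  have hu : u < 3 / 4 := by linarith [pow_pos hq 2]
  have hQ := (quadraticFactor_pos (t := t) hu).ne'
  have hL : 1 - u * t ≠ 0 := by linarith
  have h1 : 1 - u ≠ 0 := by linarith
  have hasDeriv_arctan_arg :
      HasDerivAt (fun t ↦ (2 * u * t + 1 - 2 * u) / q) (2 * u / q) t := by
    simpa using ((((hasDerivAt_id t).const_mul (2 * u)).add_const 1).sub_const (2 * u)).div_const q
  have hasDeriv_linear : HasDerivAt (fun t ↦ 1 - u * t) (-u) t := by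
    simpa using ((hasDerivAt_id t).const_mul u).const_sub 1
  have hasDeriv_quadratic :
      HasDerivAt (quadraticFactor u) (2 * u ^ 2 * t + u * (1 - 2 * u)) t := by
    refine ((((hasDerivAt_pow 2 t).const_mul (u ^ 2)).add
      ((hasDerivAt_id t).const_mul (u * (1 - 2 * u)))).add_const ((1 - u) ^ 2)).congr_deriv ?_
    simp only [Nat.cast_ofNat, Nat.add_one_sub_one, pow_one, mul_one]
    ring
  have one_add_sq : 1 + ((2 * u * t + 1 - 2 * u) / q) ^ 2 = 4 * quadraticFactor u t / q ^ 2 := by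
    rw [four_mul_quadraticFactor hqu]
    field_simp
  refine (((hasDeriv_arctan_arg.arctan.const_mul (2 * u / q)).sub
    ((hasDeriv_linear.log hL).const_mul (1 - u))).sub (hasDeriv_quadratic.log hQ)).congr_deriv ?_
  rw [one_add_sq, one_sub_cubicParam_mul (by linarith)]
  field_simp
  rw [quadraticFactor]
  ring

lemma cubicAntideriv_one_sub_cubicAntideriv_zero (hq : 0 < q) (hqu : q ^ 2 = 3 - 4 * u) :
    cubicAntideriv u q 1 - cubicAntideriv u q 0 =
      u * (6 * (π / 3 - arctan q) / q + log (1 - u)) := by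
  have quadratic_one : quadraticFactor u 1 = 1 - u := by rw [quadraticFactor]; ring
  have quadratic_zero : quadraticFactor u 0 = (1 - u) ^ 2 := by rw [quadraticFactor]; ring
  have arg_one : (2 * u * 1 + 1 - 2 * u) / q = q⁻¹ := by field_simp; ring
  have arg_zero : (2 * u * 0 + 1 - 2 * u) / q = (q - q⁻¹) / 2 := by
    field_simp
    rw [hqu]
    ring
  rw [cubicAntideriv, cubicAntideriv, quadratic_one, quadratic_zero, arg_one, arg_zero, log_pow]
  simp only [mul_one, mul_zero, sub_zero, log_one]
  push_cast
  linear_combination (2 * u / q) * arctan_inv_sub_arctan_half_sub_inv hq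

lemma mul_integral_eq_cubicAntideriv_sub (hq : 0 < q) (hqu : q ^ 2 = 3 - 4 * u) :
    u ^ 3 * (3 - u) / (1 - u) ^ 2 *
        ∫ t in (0 : ℝ)..1, (1 - t) ^ 2 / (1 - cubicParam u * (t * (1 - t) ^ 2)) =
      cubicAntideriv u q 1 - cubicAntideriv u q 0 := by
  have hu : u < 3 / 4 := by linarith [pow_pos hq 2]
  have mul_lt_one {t : ℝ} (ht : t ∈ uIcc (0 : ℝ) 1) : u * t < 1 := by
    rw [uIcc_of_le zero_le_one] at ht
    nlinarith [ht.1, ht.2]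
  have denom_ne {t : ℝ} (ht : t ∈ uIcc (0 : ℝ) 1) :
      1 - cubicParam u * (t * (1 - t) ^ 2) ≠ 0 := by
    rw [one_sub_cubicParam_mul (by linarith)]
    exact (div_pos (mul_pos (by linarith [mul_lt_one ht]) (quadraticFactor_pos hu))
      (pow_pos (by linarith) 2)).ne'
  rw [← intervalIntegral.integral_const_mul]
  refine intervalIntegral.integral_eq_sub_of_hasDerivAt
    (fun t ht ↦ hasDerivAt_cubicAntideriv hq hqu (mul_lt_one ht)) ?_
  exact (continuousOn_const.mul <| ContinuousOn.div (by fun_prop) (by fun_prop)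
    fun t ht ↦ denom_ne ht).intervalIntegrable

lemma mul_integral_div_one_sub_cubicParam (hu : u < 3 / 4) :
    u ^ 2 * (3 - u) / (1 - u) ^ 2 *
        ∫ t in (0 : ℝ)..1, (1 - t) ^ 2 / (1 - cubicParam u * (t * (1 - t) ^ 2)) =
      6 * (π / 3 - arctan √(3 - 4 * u)) / √(3 - 4 * u) + log (1 - u) := by
  obtain rfl | hu0 := eq_or_ne u 0
  · simp
  have hq : 0 < √(3 - 4 * u) := sqrt_pos.mpr (by linarith)
  have hqu : √(3 - 4 * u) ^ 2 = 3 - 4 * u := sq_sqrt (by linarith)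
  apply mul_left_cancel₀ hu0
  rw [← cubicAntideriv_one_sub_cubicAntideriv_zero hq hqu,
    ← mul_integral_eq_cubicAntideriv_sub hq hqu]
  ring

end Integral

section ClosedForm

variable {u : ℝ}

lemma hasDerivAt_closedForm (hu : u < 3 / 4) :
    HasDerivAt (fun u ↦ 6 * (π / 3 - arctan √(3 - 4 * u)) ^ 2 - 1 / 2 * log (1 - u) ^ 2)
      ((6 * (π / 3 - arctan √(3 - 4 * u)) / √(3 - 4 * u) + log (1 - u)) / (1 - u)) u := by
  have h1 : 1 - u ≠ 0 := by linarith
  have hq : 0 < √(3 - 4 * u) := sqrt_pos.mpr (by linarith)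
  have hqu : √(3 - 4 * u) ^ 2 = 3 - 4 * u := sq_sqrt (by linarith)
  have hasDeriv_sqrt : HasDerivAt (fun u ↦ √(3 - 4 * u)) (-2 / √(3 - 4 * u)) u := by
    refine ((((hasDerivAt_id u).const_mul 4).const_sub 3).sqrt
      (by simp only [id]; linarith)).congr_deriv ?_
    simp only [id]
    field_simp
    norm_num
  have hasDeriv_log : HasDerivAt (fun u ↦ log (1 - u)) (-1 / (1 - u)) u :=
    ((hasDerivAt_id u).const_sub 1).log h1
  refine ((((hasDeriv_sqrt.arctan.const_sub (π / 3)).pow 2).const_mul 6).sub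
    ((hasDeriv_log.pow 2).const_mul (1 / 2))).congr_deriv ?_
  rw [hqu, show 1 + (3 - 4 * u) = 4 * (1 - u) by ring]
  field_simp
  ring

theorem invSqChooseSeries_cubicParam (hu : u ∈ cubicParamDomain) :
    invSqChooseSeries (cubicParam u) =
      6 * (π / 3 - arctan √(3 - 4 * u)) ^ 2 - 1 / 2 * log (1 - u) ^ 2 := by
  have hasDeriv_series {v : ℝ} (hv : v ∈ cubicParamDomain) :
      HasDerivAt (fun v ↦ invSqChooseSeries (cubicParam v))
        ((6 * (π / 3 - arctan √(3 - 4 * v)) / √(3 - 4 * v) + log (1 - v)) / (1 - v)) v := by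
    have hv1 : v < 1 := hv.1.trans (by norm_num)
    refine ((hasDerivAt_invSqChooseSeries (abs_cubicParam_lt hv)).comp v
      (hasDerivAt_cubicParam hv1.ne)).congr_deriv ?_
    rw [← mul_integral_div_one_sub_cubicParam hv.1, pow_succ (1 - v) 2, ← div_div]
    ring
  have zero_mem : (0 : ℝ) ∈ cubicParamDomain := by norm_num [cubicParamDomain, cubicParam]
  refine isOpen_cubicParamDomain.eqOn_of_deriv_eq isPreconnected_cubicParamDomain
    (fun v hv ↦ (hasDeriv_series hv).differentiableAt.differentiableWithinAt)
    (fun v hv ↦ (hasDerivAt_closedForm hv.1).differentiableAt.differentiableWithinAt)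
    (fun v hv ↦ (hasDeriv_series hv).deriv.trans (hasDerivAt_closedForm hv.1).deriv.symm)
    zero_mem ?_ hu
  simp [cubicParam]

end ClosedForm

lemma pi_div_three_sub_arctan_sqrt_three_fifths :
    π / 3 - arctan √(3 / 5) = arctan (√15 - √12) := by
  have h3 : √3 ^ 2 = 3 := sq_sqrt (by norm_num)
  have h5 : √5 ^ 2 = 5 := sq_sqrt (by norm_num)
  have sqrt_three_fifths : √(3 / 5) = √3 / √5 := sqrt_div (by norm_num) 5
  have sqrt_fifteen : √15 = √3 * √5 := by rw [← sqrt_mul (by norm_num)]; norm_num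
  have sqrt_twelve : √12 = √3 * 2 := by
    rw [show (12 : ℝ) = 3 * 2 ^ 2 by norm_num, sqrt_mul (by norm_num), sqrt_sq (by norm_num)]
  have sqrt_five_lt : √5 < 3 := by rw [sqrt_lt' (by norm_num)]; norm_num
  have hmul : (√3 * √5 - √3 * 2) * (√3 / √5) = 1 - 2 * (3 - √5) / √5 := by
    field_simp
    linear_combination (√5 - 2) * h3
  have quotient_pos : 0 < 2 * (3 - √5) / √5 := div_pos (by linarith) (by positivity)
  rw [sub_eq_iff_eq_add, ← arctan_sqrt_three, sqrt_three_fifths, sqrt_fifteen, sqrt_twelve,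
    arctan_add (by linarith), hmul, sub_sub_cancel]
  congr 1
  have : 3 - √5 ≠ 0 := by linarith
  field_simp
  linear_combination -h5

theorem stmt_13 :
    ∑' k : ℕ, (27/20 : ℝ)^(k+1) / (((k:ℝ)+1)^2 * (((3*(k+1)).choose (k+1) : ℕ) : ℝ)) =
    6*(Real.arctan (Real.sqrt 15 - Real.sqrt 12))^2 - (1/2)*(Real.log (5/2))^2 := by
  have h := invSqChooseSeries_cubicParam (u := 3 / 5) (by norm_num [cubicParamDomain, cubicParam])
  have param : cubicParam (3 / 5) = 27 / 20 := by norm_num [cubicParam]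
  have log_eq : log (1 - 3 / 5) = -log (5 / 2) := by rw [← log_inv]; norm_num
  rwa [param, log_eq, neg_sq, show (3 - 4 * (3 / 5) : ℝ) = 3 / 5 by norm_num,
    pi_div_three_sub_arctan_sqrt_three_fifths] at h
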